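/- arXiv:1902.02152 — 2 statements merged into one kernel-verified Lean document; each statement's English description precedes it below -/
import Mathlib

section
/- Let J be a finite group, f : F → J a surjective homomorphism with kernel K, and let m = d_F(K;ℤ) be the minimal number of elements of K whose images generate the abelianization K^{ab} as a module over J = F/K (acting via conjugation in F). Let G be a group fitting in an extension 1 → A → G → J → 1 where A is a nontrivial free abelian group. Then for every function ρ : ℕ → ℕ with ρ(l) ≥ m for all l, the probability that there exists a surjective homomorphism φ : G_R ↠ G carrying f, for R chosen uniformly in S_l^{ρ(l)}, tends to 0 as l → ∞. -/
open Filter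

/-- The type of reduced words of length `l` in the alphabet `X ∪ X⁻¹`, where
`X = {x_1, …, x_n}`; a word is a list of letters `(i, b)`, the letter being `x_i` if
`b = true` and `x_i⁻¹` if `b = false`, and it is reduced if it equals its free reduction. -/
def ReducedWord (n l : ℕ) : Type :=
  {w : List (Fin n × Bool) // FreeGroup.reduce w = w ∧ w.length = l}

/-- The probability, for a tuple `R` of `k` relators chosen uniformly and independently among
the reduced words of length `l`, that the predicate `P` holds of the corresponding tuple of
elements of the free group on `n` generators. -/
noncomputable def wordProb (n l k : ℕ) (P : (Fin k → FreeGroup (Fin n)) → Prop) : ℝ :=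
  (Nat.card {R : Fin k → ReducedWord n l // P fun i => FreeGroup.mk (R i).1} : ℝ) /
    (Nat.card (ReducedWord n l) : ℝ) ^ k

/-- A tuple of elements of `K = ker f ⊴ F` generates the abelianisation `K^{ab}` as a module
over `J = F/K` (acting by conjugation) exactly when the normal closure in `F` of these
elements, together with the commutator subgroup `[K,K]`, is all of `K`. -/
def GeneratesRelModule {F J : Type*} [Group F] [Group J] (f : F →* J)
    {k : ℕ} (v : Fin k → F) : Prop :=
  (∀ i, v i ∈ f.ker) ∧
    Subgroup.normalClosure (Set.range v) ⊔ ⁅(f.ker : Subgroup F), (f.ker : Subgroup F)⁆ = f.ker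

namespace FreeGroup

section Words

variable {α : Type*}

/-- The inverse of a letter. -/
def invLetter (z : α × Bool) : α × Bool := (z.1, !z.2)

lemma mk_replicate (b : ℕ) (z : α × Bool) : mk (List.replicate b z) = mk [z] ^ b := by
  induction b with
  | zero => simp [one_eq_mk]
  | succ b ih => rw [List.replicate_succ, pow_succ', ← ih, mul_mk, List.singleton_append]

lemma mk_invLetter (z : α × Bool) : mk [invLetter z] = (mk [z])⁻¹ := by
  simp [invLetter, inv_mk, invRev]

lemma compatible_iff_ne_invLetter (y a : α × Bool) :
    (y.1 = a.1 → y.2 = a.2) ↔ a ≠ invLetter y := by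
  obtain ⟨y, s⟩ := y
  obtain ⟨a, t⟩ := a
  cases s <;> cases t <;> simp [invLetter, eq_comm]

lemma isReduced_cons_iff (y : α × Bool) (w : List (α × Bool)) :
    IsReduced (y :: w) ↔ IsReduced w ∧ ∀ a ∈ w.head?, a ≠ invLetter y := by
  simp only [IsReduced, List.isChain_cons, compatible_iff_ne_invLetter]
  tauto

lemma isReduced_replicate (b : ℕ) (z : α × Bool) : IsReduced (List.replicate b z) :=
  List.isChain_replicate_of_rel b fun _ => rfl

/-- Padding a reduced word on the left by a conjugate `y ^ b * x ^ e * y ^ (-b)`. -/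
lemma isReduced_padded {x y : α × Bool} {w : List (α × Bool)} {b e : ℕ} (hb : b ≠ 0) (he : e ≠ 0)
    (hw : IsReduced w) (hyw : ∀ a ∈ w.head?, a ≠ y) (hxy : x ≠ y) (hxy' : x ≠ invLetter y) :
    IsReduced (List.replicate b y ++ (List.replicate e x ++
      (List.replicate b (invLetter y) ++ w))) := by
  have hy : invLetter (invLetter y) = y := by simp [invLetter]
  have h1 : IsReduced (List.replicate b (invLetter y) ++ w) := by
    refine List.isChain_append.2 ⟨isReduced_replicate _ _, hw, fun c hc a ha => ?_⟩
    simp [List.getLast?_replicate, hb] at hc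
    rw [compatible_iff_ne_invLetter, ← hc, hy]
    exact hyw a ha
  have h2 : IsReduced (List.replicate e x ++ (List.replicate b (invLetter y) ++ w)) := by
    refine List.isChain_append.2 ⟨isReduced_replicate _ _, h1, fun c hc a ha => ?_⟩
    simp [List.getLast?_replicate, List.head?_append, List.head?_replicate, hb, he] at hc ha
    rw [compatible_iff_ne_invLetter, ← hc, ← ha]
    intro h
    apply hxy
    have := congrArg invLetter h
    rw [hy] at this
    simpa [invLetter] using this.symm
  refine List.isChain_append.2 ⟨isReduced_replicate _ _, h2, fun c hc a ha => ?_⟩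
  simp [List.getLast?_replicate, List.head?_append, List.head?_replicate, hb, he] at hc ha
  rw [compatible_iff_ne_invLetter, ← hc, ← ha]
  exact hxy'

variable [Fintype α] [DecidableEq α]

/-- The reduced words of length `l` whose first letter is not `z`. -/
def avoidingWords : ℕ → α × Bool → Finset (List (α × Bool))
  | 0, _ => {[]}
  | l + 1, z => (Finset.univ.erase z).biUnion fun y =>
      (avoidingWords l (invLetter y)).image (List.cons y)

lemma mem_avoidingWords {l : ℕ} {z : α × Bool} {w : List (α × Bool)} :
    w ∈ avoidingWords l z ↔ w.length = l ∧ IsReduced w ∧ ∀ a ∈ w.head?, a ≠ z := by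
  induction l generalizing z w with
  | zero =>
    simp only [avoidingWords, Finset.mem_singleton, List.length_eq_zero_iff]
    constructor
    · rintro rfl
      simp
    · exact fun h => h.1
  | succ l ih =>
    cases w with
    | nil => simp [avoidingWords]
    | cons y w =>
      simp [avoidingWords, ih, isReduced_cons_iff]
      tauto

lemma card_filter_avoidingWords_succ (P : List (α × Bool) → Prop) [DecidablePred P]
    (l : ℕ) (z : α × Bool) :
    ((avoidingWords (l + 1) z).filter P).card = ∑ y ∈ Finset.univ.erase z,
      ((avoidingWords l (invLetter y)).filter fun w => P (y :: w)).card := by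
  rw [avoidingWords, Finset.filter_biUnion, Finset.card_biUnion]
  · refine Finset.sum_congr rfl fun y _ => ?_
    rw [Finset.filter_image, Finset.card_image_of_injective _ (List.cons_injective)]
  · intro y _ y' _ hyy'
    rw [Function.onFun, Finset.disjoint_left]
    intro w hw hw'
    simp only [Finset.mem_filter, Finset.mem_image] at hw hw'
    obtain ⟨⟨u, -, rfl⟩, -⟩ := hw
    obtain ⟨⟨u', -, h⟩, -⟩ := hw'
    exact hyy' (List.cons_eq_cons.1 h).1.symm

lemma card_erase_letter (z : α × Bool) :
    (Finset.univ.erase z).card = 2 * Fintype.card α - 1 := by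
  rw [Finset.card_erase_of_mem (Finset.mem_univ _), Finset.card_univ, Fintype.card_prod,
    Fintype.card_bool, mul_comm]

lemma card_avoidingWords (l : ℕ) (z : α × Bool) :
    (avoidingWords l z).card = (2 * Fintype.card α - 1) ^ l := by
  induction l generalizing z with
  | zero => simp [avoidingWords]
  | succ l ih =>
    have := card_filter_avoidingWords_succ (fun _ => True) l z
    simp only [Finset.filter_true, ih, Finset.sum_const, card_erase_letter, smul_eq_mul] at this
    rw [this, pow_succ']

lemma exists_notMem_pair (hα : 2 ≤ Fintype.card α) (a b : α × Bool) : ∃ y, y ≠ a ∧ y ≠ b := by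
  obtain ⟨y, -, hy⟩ := Finset.exists_mem_notMem_of_card_lt_card
    (s := ({a, b} : Finset (α × Bool))) (t := Finset.univ) (by
      rw [Finset.card_univ, Fintype.card_prod, Fintype.card_bool]
      exact Finset.card_le_two.trans_lt (by omega))
  exact ⟨y, by simpa using hy⟩

/-- For a suitable length `k`, at least half of a finite quotient is covered by the reduced words
of length `k` with any prescribed forbidden first letter. -/
lemma exists_many_images {Q : Type*} [Group Q] [Fintype Q] {q : FreeGroup α →* Q}
    (hα : 2 ≤ Fintype.card α) (hq : Function.Surjective q) :
    ∃ k, ∃ S : Finset Q, Fintype.card Q ≤ 2 * S.card ∧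
      ∀ h ∈ S, ∀ z, ∃ u ∈ avoidingWords k z, q (mk u) = h := by
  choose s hs using hq
  let len : Q → ℕ := fun h => (s h).toWord.length
  obtain ⟨L, hL⟩ : ∃ L, ∀ h, len h ≤ L :=
    ⟨Finset.univ.sup len, fun h => Finset.le_sup (Finset.mem_univ h)⟩
  obtain ⟨par, hpar, hcard⟩ : ∃ par < 2,
      Fintype.card Q ≤ 2 * (Finset.univ.filter fun h => len h % 2 = par).card := by
    have := Finset.card_filter_add_card_filter_not (s := (Finset.univ : Finset Q))
      (fun h => len h % 2 = 0)
    simp only [Nat.mod_two_not_eq_zero, Finset.card_univ] at this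
    by_cases h : Fintype.card Q ≤ 2 * (Finset.univ.filter fun h => len h % 2 = 0).card
    · exact ⟨0, by omega, h⟩
    · exact ⟨1, by omega, by omega⟩
  refine ⟨Fintype.card Q + 2 * (L + 1) + par, _, hcard, fun h hh z => ?_⟩
  have hlen : len h % 2 = par := by simpa using hh
  obtain ⟨y, hyz, hyw⟩ : ∃ y, y ≠ z ∧ ∀ a ∈ (s h).toWord.head?, a ≠ y := by
    cases hw : (s h).toWord.head? with
    | none =>
      obtain ⟨y, hy, -⟩ := exists_notMem_pair hα z z
      exact ⟨y, hy, by simp⟩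
    | some a =>
      obtain ⟨y, hy, hy'⟩ := exists_notMem_pair hα z a
      exact ⟨y, hy, by simpa using hy'.symm⟩
  obtain ⟨x, hxy, hxy'⟩ := exists_notMem_pair hα y (invLetter y)
  have hLh := hL h
  obtain ⟨b, hb⟩ : ∃ b, 2 * b + len h = 2 * (L + 1) + par :=
    ⟨(2 * (L + 1) + par - len h) / 2, by omega⟩
  have hb0 : b ≠ 0 := by omega
  refine ⟨_, mem_avoidingWords.2 ⟨?_, isReduced_padded hb0 (Fintype.card_ne_zero (α := Q))
    (isReduced_toWord (x := s h)) hyw hxy hxy', ?_⟩, ?_⟩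
  · simp only [List.length_append, List.length_replicate]
    change _ + (_ + (_ + len h)) = _
    omega
  · simp [List.head?_append, List.head?_replicate, hb0, hyz]
  · simp only [← mul_mk, mk_replicate, mk_invLetter, mk_toWord, _root_.map_mul, _root_.map_pow,
      _root_.map_inv, hs, pow_card_eq_one]
    simp

section Distribution

variable {Q : Type*} [Group Q] [DecidableEq Q] (q : FreeGroup α →* Q)

/-- The proportion of words mapping to `g` among the reduced words of length `l` whose first
letter is not `z`. -/
noncomputable def wordDist (l : ℕ) (z : α × Bool) (g : Q) : ℝ :=
  ((avoidingWords l z).filter fun w => q (mk w) = g).card / ((2 * Fintype.card α - 1 : ℕ) : ℝ) ^ l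

lemma wordDist_nonneg (l : ℕ) (z : α × Bool) (g : Q) : 0 ≤ wordDist q l z g := by
  unfold wordDist; positivity

lemma wordDist_succ (l : ℕ) (z : α × Bool) (g : Q) :
    wordDist q (l + 1) z g = ((2 * Fintype.card α - 1 : ℕ) : ℝ)⁻¹ *
      ∑ y ∈ Finset.univ.erase z, wordDist q l (invLetter y) ((q (mk [y]))⁻¹ * g) := by
  have h (y : α × Bool) (w : List (α × Bool)) :
      q (mk (y :: w)) = g ↔ q (mk w) = (q (mk [y]))⁻¹ * g := by
    rw [eq_inv_mul_iff_mul_eq, ← _root_.map_mul q, mul_mk, List.singleton_append]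
  simp only [wordDist, card_filter_avoidingWords_succ, h, ← Finset.sum_div, Nat.cast_sum]
  rw [pow_succ, div_mul_eq_div_div]
  ring

lemma sum_wordDist [Fintype Q] [Nonempty α] (l : ℕ) (z : α × Bool) :
    ∑ g, wordDist q l z g = 1 := by
  have hD : ((2 * Fintype.card α - 1 : ℕ) : ℝ) ≠ 0 := by
    have := Fintype.card_pos (α := α)
    exact_mod_cast (by omega)
  simp only [wordDist, ← Finset.sum_div, ← Nat.cast_sum]
  rw [← Finset.card_eq_sum_card_fiberwise (fun _ _ => Finset.mem_univ _), card_avoidingWords,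
    Nat.cast_pow, div_self (pow_ne_zero _ hD)]

lemma sub_wordDist_succ [Nonempty α] (l : ℕ) (z : α × Bool) (g : Q) (M : ℝ) :
    M - wordDist q (l + 1) z g = ((2 * Fintype.card α - 1 : ℕ) : ℝ)⁻¹ *
      ∑ y ∈ Finset.univ.erase z, (M - wordDist q l (invLetter y) ((q (mk [y]))⁻¹ * g)) := by
  have hD : ((2 * Fintype.card α - 1 : ℕ) : ℝ) ≠ 0 := by
    have := Fintype.card_pos (α := α)
    exact_mod_cast (by omega)
  rw [Finset.sum_sub_distrib, mul_sub, ← wordDist_succ, Finset.sum_const, card_erase_letter,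
    nsmul_eq_mul, inv_mul_cancel_left₀ hD]

lemma wordDist_succ_le [Nonempty α] {l : ℕ} {M : ℝ} (hM : ∀ z g, wordDist q l z g ≤ M)
    (z : α × Bool) (g : Q) : wordDist q (l + 1) z g ≤ M := by
  rw [← sub_nonneg, sub_wordDist_succ]
  exact mul_nonneg (by positivity) (Finset.sum_nonneg fun y _ => sub_nonneg.2 (hM _ _))

lemma wordDist_add_le [Nonempty α] {l : ℕ} {M : ℝ} (hM : ∀ z g, wordDist q l z g ≤ M) (k : ℕ)
    (z : α × Bool) (g : Q) : wordDist q (l + k) z g ≤ M := by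
  induction k generalizing z g with
  | zero => exact hM z g
  | succ k ih => exact wordDist_succ_le q ih z g

/-- A gap below the bound `M` propagates along every reduced word. -/
lemma exists_mul_sub_wordDist_le [Nonempty α] {l : ℕ} {M : ℝ}
    (hM : ∀ z g, wordDist q l z g ≤ M) {k : ℕ} {z : α × Bool} {u : List (α × Bool)}
    (hu : u ∈ avoidingWords k z) :
    ∃ z', ∀ g, (((2 * Fintype.card α - 1 : ℕ) : ℝ)⁻¹) ^ k *
      (M - wordDist q l z' ((q (mk u))⁻¹ * g)) ≤ M - wordDist q (l + k) z g := by
  induction k generalizing z u with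
  | zero =>
    obtain rfl : u = [] := by simpa [avoidingWords] using hu
    exact ⟨z, fun g => by simp [← one_eq_mk]⟩
  | succ k ih =>
    simp only [avoidingWords, Finset.mem_biUnion, Finset.mem_image] at hu
    obtain ⟨y, hy, u, hu, rfl⟩ := hu
    obtain ⟨z', hz'⟩ := ih hu
    refine ⟨z', fun g => ?_⟩
    have h : (q (mk (y :: u)))⁻¹ * g = (q (mk u))⁻¹ * ((q (mk [y]))⁻¹ * g) := by
      rw [← mul_assoc, ← mul_inv_rev, ← _root_.map_mul q, mul_mk, List.singleton_append]
    rw [h, pow_succ', mul_assoc, ← add_assoc, sub_wordDist_succ]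
    refine mul_le_mul_of_nonneg_left ((hz' _).trans ?_) (by positivity)
    exact Finset.single_le_sum
      (f := fun y => M - wordDist q (l + k) (invLetter y) ((q (mk [y]))⁻¹ * g))
      (fun y _ => sub_nonneg.2 (wordDist_add_le q hM k _ _)) hy

lemma exists_contraction [Fintype Q] (hα : 2 ≤ Fintype.card α) (hq : Function.Surjective q) :
    ∃ k : ℕ, ∃ ε > (0 : ℝ), ∀ l M, (∀ z g, wordDist q l z g ≤ M) → ∀ z g,
      wordDist q (l + k) z g ≤ M - ε * (M - 4 * Fintype.card α / Fintype.card Q) := by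
  have : Nonempty α := Fintype.card_pos_iff.1 (by omega)
  obtain ⟨k, S, hS, hk⟩ := exists_many_images hα hq
  have hD : 0 < ((2 * Fintype.card α - 1 : ℕ) : ℝ) := by exact_mod_cast (by omega)
  have hQ : (0 : ℝ) < Fintype.card Q := by exact_mod_cast Fintype.card_pos
  refine ⟨k, (((2 * Fintype.card α - 1 : ℕ) : ℝ)⁻¹) ^ k, by positivity, fun l M hM z g => ?_⟩
  have hpath : ∀ h ∈ S, ∃ z', (((2 * Fintype.card α - 1 : ℕ) : ℝ)⁻¹) ^ k *
      (M - wordDist q l z' (h⁻¹ * g)) ≤ M - wordDist q (l + k) z g := fun h hh => by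
    obtain ⟨u, hu, rfl⟩ := hk h hh z
    obtain ⟨z', hz'⟩ := exists_mul_sub_wordDist_le q hM hu
    exact ⟨z', hz' g⟩
  choose! z' hz' using hpath
  have hsum : ∑ h ∈ S, wordDist q l (z' h) (h⁻¹ * g) ≤ 2 * Fintype.card α := by
    calc ∑ h ∈ S, wordDist q l (z' h) (h⁻¹ * g)
        ≤ ∑ h ∈ S, ∑ z, wordDist q l z (h⁻¹ * g) := Finset.sum_le_sum fun h _ =>
          Finset.single_le_sum (f := fun z => wordDist q l z (h⁻¹ * g))
            (fun z _ => wordDist_nonneg q l z _) (Finset.mem_univ _)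
      _ ≤ ∑ h, ∑ z, wordDist q l z (h⁻¹ * g) := Finset.sum_le_univ_sum_of_nonneg
          fun h => Finset.sum_nonneg fun z _ => wordDist_nonneg q l z _
      _ = ∑ z, ∑ h, wordDist q l z h := by
          rw [Finset.sum_comm]
          exact Finset.sum_congr rfl fun z _ => Equiv.sum_comp
            ((Equiv.inv Q).trans (Equiv.mulRight g)) fun h => wordDist q l z h
      _ = 2 * Fintype.card α := by
          simp [sum_wordDist, Fintype.card_prod, mul_comm]
  obtain ⟨h, hh, hle⟩ : ∃ h ∈ S,
      wordDist q l (z' h) (h⁻¹ * g) ≤ 4 * Fintype.card α / Fintype.card Q := by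
    by_contra! hcon
    have hS' : (Fintype.card Q : ℝ) ≤ 2 * S.card := by exact_mod_cast hS
    have hne : S.Nonempty := Finset.card_pos.1 (by
      have := Fintype.card_pos (α := Q)
      omega)
    have h1 := Finset.sum_lt_sum_of_nonempty hne hcon
    rw [Finset.sum_const, nsmul_eq_mul] at h1
    have h2 : (2 * Fintype.card α : ℝ) ≤ S.card * (4 * Fintype.card α / Fintype.card Q) := by
      rw [mul_div_assoc', le_div_iff₀ hQ]
      have : (0 : ℝ) ≤ Fintype.card α := by positivity
      nlinarith
    linarith
  have h3 : (((2 * Fintype.card α - 1 : ℕ) : ℝ)⁻¹) ^ k *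
      (M - 4 * Fintype.card α / Fintype.card Q) ≤ _ :=
    (mul_le_mul_of_nonneg_left (by linarith) (by positivity)).trans (hz' h hh)
  linarith

lemma eventually_wordDist_le [Fintype Q] (hα : 2 ≤ Fintype.card α) (hq : Function.Surjective q)
    {δ : ℝ} (hδ : 0 < δ) :
    ∀ᶠ l in atTop, ∀ z g, wordDist q l z g ≤ 4 * Fintype.card α / Fintype.card Q + δ := by
  have : Nonempty α := Fintype.card_pos_iff.1 (by omega)
  obtain ⟨k, ε, hε, hk⟩ := exists_contraction q hα hq
  let M : ℕ → ℝ := fun l => ⨆ p : (α × Bool) × Q, wordDist q l p.1 p.2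
  have hM (l : ℕ) (z : α × Bool) (g : Q) : wordDist q l z g ≤ M l :=
    le_ciSup (f := fun p : (α × Bool) × Q => wordDist q l p.1 p.2)
      (Set.finite_range _).bddAbove (z, g)
  have hanti : Antitone M := antitone_nat_of_succ_le fun l =>
    ciSup_le fun p => wordDist_succ_le q (hM l) _ _
  have hbdd : BddBelow (Set.range M) := by
    refine ⟨0, ?_⟩
    rintro _ ⟨l, rfl⟩
    exact Real.iSup_nonneg fun p => wordDist_nonneg q l _ _
  have hlim := tendsto_atTop_ciInf hanti hbdd
  have hle : (⨅ l, M l) ≤ (⨅ l, M l) - ε * ((⨅ l, M l) - 4 * Fintype.card α / Fintype.card Q) :=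
    le_of_tendsto_of_tendsto' (hlim.comp (tendsto_add_atTop_nat k))
      (hlim.sub ((hlim.sub_const _).const_mul ε)) fun l => ciSup_le fun p => hk l _ (hM l) _ _
  have hle' : (⨅ l, M l) < 4 * Fintype.card α / Fintype.card Q + δ := by
    have : (⨅ l, M l) - 4 * Fintype.card α / Fintype.card Q ≤ 0 := by
      by_contra! h
      nlinarith [mul_pos hε h]
    linarith
  filter_upwards [hlim.eventually_lt_const hle'] with l hl z g
  exact (hM l z g).trans hl.le

end Distribution

end Words

end FreeGroup

section LinearFamilies

variable {F E V W : Type*} [Field F] [Fintype F] [AddCommGroup E] [Module F E] [Finite E]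
  [AddCommGroup V] [Module F V] [FiniteDimensional F V] [AddCommGroup W] [Module F W]

/-- If some member of a linear family of linear maps is surjective, then the members which are
not surjective form a small proportion of the family. -/
lemma card_mul_card_not_surjective_le (T : E →+ (W →ₗ[F] V))
    (hT : ∀ (c : F) (e : E), T (c • e) = c • T e) {e₀ : E} (he₀ : Function.Surjective (T e₀)) :
    Fintype.card F * Nat.card {e // ¬ Function.Surjective (T e)} ≤
      Module.finrank F V * Nat.card E := by
  classical
  have := Fintype.ofFinite E
  obtain ⟨s, hs⟩ := (T e₀).exists_rightInverse_of_surjective (LinearMap.range_eq_top.2 he₀)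
  have hline (e : E) : (Finset.univ.filter fun c : F =>
      ¬ Function.Surjective (T (e + c • e₀))).card ≤ Module.finrank F V := by
    let A : Module.End F V := T e ∘ₗ s
    have hsub : (Finset.univ.filter fun c : F => ¬ Function.Surjective (T (e + c • e₀))) ⊆
        A.charpoly.roots.toFinset.image Neg.neg := by
      intro c hc
      rw [Finset.mem_filter] at hc
      refine Finset.mem_image.2 ⟨-c, ?_, neg_neg c⟩
      rw [Multiset.mem_toFinset, Polynomial.mem_roots A.charpoly_monic.ne_zero,
        ← Module.End.hasEigenvalue_iff_isRoot_charpoly, Module.End.hasEigenvalue_iff]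
      intro hbot
      apply hc.2
      rw [Module.End.eigenspace_def, LinearMap.ker_eq_bot] at hbot
      intro v
      obtain ⟨x, hx⟩ := LinearMap.injective_iff_surjective.1 hbot v
      refine ⟨s x, ?_⟩
      have hs' : T e₀ (s x) = x := LinearMap.congr_fun hs x
      rw [← hx, map_add, hT]
      simp [A, hs']
    calc _ ≤ _ := Finset.card_le_card hsub
      _ ≤ _ := Finset.card_image_le
      _ ≤ A.charpoly.roots.card := Multiset.toFinset_card_le _
      _ ≤ A.charpoly.natDegree := Polynomial.card_roots' _
      _ = _ := A.charpoly_natDegree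
  calc Fintype.card F * Nat.card {e // ¬ Function.Surjective (T e)}
      = ∑ c : F, (Finset.univ.filter fun e => ¬ Function.Surjective (T (e + c • e₀))).card := by
        rw [Finset.sum_congr rfl fun c _ => Finset.card_equiv (Equiv.addRight (c • e₀))
          (t := Finset.univ.filter fun e => ¬ Function.Surjective (T e)) (by simp)]
        rw [Finset.sum_const, Nat.card_eq_fintype_card, Fintype.card_subtype, Finset.card_univ,
          smul_eq_mul]
    _ = ∑ e : E, (Finset.univ.filter fun c : F =>
          ¬ Function.Surjective (T (e + c • e₀))).card := by
        simp only [Finset.card_filter]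
        exact Finset.sum_comm
    _ ≤ ∑ e : E, Module.finrank F V := Finset.sum_le_sum fun e _ => hline e
    _ = _ := by rw [Finset.sum_const, smul_eq_mul, mul_comm, Finset.card_univ,
          Nat.card_eq_fintype_card]

end LinearFamilies

/-- If an elementary abelian normal `p`-subgroup `B` is the normal closure of `m` elements, then
all but a small proportion of the `m`-tuples in `B` have normal closure `B`. -/
lemma card_normalClosure_ne_le {Q : Type*} [Group Q] [Finite Q] (p : ℕ) [Fact p.Prime]
    (B : Subgroup Q) [B.Normal] (hcomm : ∀ a b : B, a * b = b * a) (hp : ∀ a : B, a ^ p = 1)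
    {m : ℕ} (v₀ : Fin m → B) (hv₀ : Subgroup.normalClosure (Set.range fun i => (v₀ i : Q)) = B) :
    p * Nat.card {v : Fin m → B // Subgroup.normalClosure (Set.range fun i => (v i : Q)) ≠ B} ≤
      Group.rank B * Nat.card B ^ m := by
  classical
  have := Fintype.ofFinite Q
  let _ : CommGroup B := { (inferInstance : Group B) with mul_comm := hcomm }
  let _ : Module (ZMod p) (Additive B) := AddCommGroup.zmodModule (n := p) hp
  let conj (g : Q) : Additive B →ₗ[ZMod p] Additive B :=
    (MonoidHom.toAdditive (MulAut.conjNormal g : B ≃* B).toMonoidHom).toZModLinearMap p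
  have hconj (g : Q) (b : B) : (((conj g (Additive.ofMul b)).toMul : B) : Q) = g * b * g⁻¹ := rfl
  let T : (Fin m → Additive B) →+ ((Fin m × Q → ZMod p) →ₗ[ZMod p] Additive B) :=
    { toFun := fun v => Fintype.linearCombination (ZMod p) fun i : Fin m × Q => conj i.2 (v i.1)
      map_zero' := by
        ext
        simp
      map_add' := fun v w => by
        ext
        simp }
  have hT (c : ZMod p) (v : Fin m → Additive B) : T (c • v) = c • T v := by
    ext
    simp [T]
  have hrange (v : Fin m → Additive B) : Function.Surjective (T v) ↔
      Submodule.span (ZMod p) (Set.range fun i : Fin m × Q => conj i.2 (v i.1)) = ⊤ := by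
    rw [← LinearMap.range_eq_top, ← Fintype.range_linearCombination]
    rfl
  have hsurj : Function.Surjective (T fun i => Additive.ofMul (v₀ i)) := by
    rw [hrange, eq_top_iff]
    rintro x -
    let P := Submodule.span (ZMod p)
      (Set.range fun i : Fin m × Q => conj i.2 (Additive.ofMul (v₀ i.1)))
    have hle : B ≤ (AddSubgroup.toSubgroup' P.toAddSubgroup).map B.subtype := by
      conv_lhs => rw [← hv₀]
      rw [Subgroup.normalClosure, Subgroup.closure_le]
      intro y hy
      obtain ⟨_, ⟨i, rfl⟩, hi⟩ := Group.mem_conjugatesOfSet_iff.1 hy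
      obtain ⟨g, rfl⟩ := isConj_iff.1 hi
      have hmem : conj g (Additive.ofMul (v₀ i)) ∈ P :=
        Submodule.subset_span (Set.mem_range_self (i, g))
      exact ⟨(conj g (Additive.ofMul (v₀ i))).toMul, hmem, hconj _ _⟩
    obtain ⟨y, hy, hyx⟩ := hle x.toMul.2
    obtain rfl : y = x.toMul := Subtype.ext hyx
    exact hy
  have hgen (v : Fin m → Additive B) (hv : Function.Surjective (T v)) :
      Subgroup.normalClosure (Set.range fun i => ((v i).toMul : Q)) = B := by
    refine le_antisymm (Subgroup.normalClosure_le_normal ?_) fun b hb => ?_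
    · rintro _ ⟨i, rfl⟩
      exact (v i).toMul.2
    · let P : Submodule (ZMod p) (Additive B) := AddSubgroup.toZModSubmodule p
        (Subgroup.toAddSubgroup ((Subgroup.normalClosure
          (Set.range fun i => ((v i).toMul : Q))).subgroupOf B))
      have hP : (⊤ : Submodule (ZMod p) (Additive B)) ≤ P := by
        rw [← (hrange v).1 hv, Submodule.span_le]
        rintro _ ⟨i, rfl⟩
        exact Subgroup.normalClosure_normal.conj_mem _
          (Subgroup.subset_normalClosure (Set.mem_range_self i.1)) i.2
      exact hP (Submodule.mem_top (x := Additive.ofMul (⟨b, hb⟩ : B)))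
  have hrank : Module.finrank (ZMod p) (Additive B) ≤ Group.rank B := by
    obtain ⟨S, hS, hS'⟩ := Group.rank_spec B
    have hspan : Submodule.span (ZMod p) ((S.image Additive.ofMul : Finset (Additive B)) :
        Set (Additive B)) = ⊤ := by
      rw [eq_top_iff]
      rintro x -
      have hle : (⊤ : Subgroup B) ≤ AddSubgroup.toSubgroup' (Submodule.span (ZMod p)
          ((S.image Additive.ofMul : Finset (Additive B)) : Set (Additive B))).toAddSubgroup := by
        rw [← hS', Subgroup.closure_le]
        intro s hs
        have hmem : Additive.ofMul s ∈ Submodule.span (ZMod p)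
            ((S.image Additive.ofMul : Finset (Additive B)) : Set (Additive B)) :=
          Submodule.subset_span (Finset.mem_coe.2 (Finset.mem_image_of_mem Additive.ofMul hs))
        exact hmem
      exact hle (Subgroup.mem_top x.toMul)
    rw [← hS, ← finrank_top, ← hspan]
    exact (finrank_span_finset_le_card _).trans Finset.card_image_le
  have key := card_mul_card_not_surjective_le T hT hsurj
  rw [ZMod.card, Nat.card_fun, Nat.card_eq_fintype_card (α := Fin m), Fintype.card_fin] at key
  refine (Nat.mul_le_mul_left p ?_).trans (key.trans (Nat.mul_le_mul_right _ hrank))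
  refine Nat.card_le_card_of_injective
    (fun v : {v : Fin m → B //
        Subgroup.normalClosure (Set.range fun i => (v i : Q)) ≠ B} =>
      (⟨fun i => Additive.ofMul (v.1 i), fun h => v.2 (hgen _ h)⟩ :
        {v : Fin m → Additive B // ¬ Function.Surjective (T v)})) fun v w h => ?_
  exact Subtype.ext (Subtype.mk.inj h)

section RandomWords

variable {n : ℕ}

instance finite_reducedWord (l : ℕ) : Finite (ReducedWord n l) :=
  ((List.finite_length_eq (Fin n × Bool) l).subset fun _ hw => hw.2).to_subtype

lemma pow_le_card_reducedWord (l : ℕ) (z : Fin n × Bool) :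
    (2 * n - 1) ^ l ≤ Nat.card (ReducedWord n l) := by
  have h := FreeGroup.card_avoidingWords l z
  rw [Fintype.card_fin] at h
  rw [← h, ← Nat.card_eq_finsetCard]
  refine Nat.card_le_card_of_injective (fun w => ⟨w.1, ?_⟩) fun w w' h =>
    Subtype.ext (Subtype.mk.inj h)
  have hw := FreeGroup.mem_avoidingWords.1 w.2
  exact ⟨FreeGroup.isReduced_iff_reduce_eq.1 hw.2.1, hw.1⟩

/-- Reduced words of length `l` become nearly equidistributed in a finite quotient of the free
group, up to a constant factor depending only on the rank. -/
lemma eventually_card_fiber_le (hn : 2 ≤ n) {Q : Type*} [Group Q] [Finite Q]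
    {q : FreeGroup (Fin n) →* Q} (hq : Function.Surjective q) {δ : ℝ} (hδ : 0 < δ) :
    ∀ᶠ l in atTop, ∀ g, (Nat.card {w : ReducedWord n l // q (FreeGroup.mk w.1) = g} : ℝ) ≤
      (8 * n / Nat.card Q + δ) * Nat.card (ReducedWord n l) := by
  classical
  have := Fintype.ofFinite Q
  have hcard : 2 ≤ Fintype.card (Fin n) := by rwa [Fintype.card_fin]
  let z : Fin n × Bool := (⟨0, by omega⟩, true)
  let z' : Fin n × Bool := (⟨0, by omega⟩, false)
  have hzz' : z ≠ z' := by simp [z, z']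
  filter_upwards [FreeGroup.eventually_wordDist_le q hcard hq (half_pos hδ)] with l hl g
  have hD : (0 : ℝ) < ((2 * n - 1 : ℕ) : ℝ) ^ l := by
    have : 0 < 2 * n - 1 := by omega
    positivity
  have hbound (y : Fin n × Bool) :
      ((((FreeGroup.avoidingWords l y).filter fun w => q (FreeGroup.mk w) = g).card : ℕ) : ℝ) ≤
        (4 * n / Nat.card Q + δ / 2) * ((2 * n - 1 : ℕ) : ℝ) ^ l := by
    have := hl y g
    rwa [FreeGroup.wordDist, Fintype.card_fin, div_le_iff₀ hD, ← Nat.card_eq_fintype_card] at this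
  have hunion : Nat.card {w : ReducedWord n l // q (FreeGroup.mk w.1) = g} ≤
      ((FreeGroup.avoidingWords l z).filter fun w => q (FreeGroup.mk w) = g).card +
        ((FreeGroup.avoidingWords l z').filter fun w => q (FreeGroup.mk w) = g).card := by
    refine le_trans ?_ (Finset.card_union_le _ _)
    rw [← Nat.card_eq_finsetCard]
    refine Nat.card_le_card_of_injective (fun w => ⟨w.1.1, ?_⟩) fun w w' h =>
      Subtype.ext (Subtype.ext (Subtype.mk.inj h))
    have hw := FreeGroup.isReduced_iff_reduce_eq.2 w.1.2.1
    simp only [Finset.mem_union, Finset.mem_filter, FreeGroup.mem_avoidingWords, w.2, w.1.2.2, hw,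
      true_and, and_true]
    by_cases h : ∀ a ∈ w.1.1.head?, a ≠ z
    · exact Or.inl h
    · push Not at h
      obtain ⟨a, ha, rfl⟩ := h
      refine Or.inr fun b hb => ?_
      rwa [← Option.mem_unique ha hb]
  have hS : (((2 * n - 1 : ℕ) : ℝ)) ^ l ≤ Nat.card (ReducedWord n l) := by
    exact_mod_cast pow_le_card_reducedWord l z
  calc (Nat.card {w : ReducedWord n l // q (FreeGroup.mk w.1) = g} : ℝ)
      ≤ _ := by exact_mod_cast hunion
    _ ≤ _ := add_le_add (hbound z) (hbound z')
    _ = (8 * n / Nat.card Q + δ) * ((2 * n - 1 : ℕ) : ℝ) ^ l := by ring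
    _ ≤ _ := mul_le_mul_of_nonneg_left hS (by positivity)

lemma wordProb_le_of_imp {l m j : ℕ} (hpos : 0 < Nat.card (ReducedWord n l))
    {P : (Fin (m + j) → FreeGroup (Fin n)) → Prop} {P' : (Fin m → FreeGroup (Fin n)) → Prop}
    (h : ∀ R, P R → P' fun i => R (Fin.castAdd j i)) :
    wordProb n l (m + j) P ≤ wordProb n l m P' := by
  have hle : Nat.card {R : Fin (m + j) → ReducedWord n l // P fun i => FreeGroup.mk (R i).1} ≤
      Nat.card {R : Fin m → ReducedWord n l // P' fun i => FreeGroup.mk (R i).1} *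
        Nat.card (ReducedWord n l) ^ j := by
    have hj : Nat.card (Fin j → ReducedWord n l) = Nat.card (ReducedWord n l) ^ j := by
      rw [Nat.card_fun, Nat.card_eq_fintype_card (α := Fin j), Fintype.card_fin]
    rw [← hj, ← Nat.card_prod]
    refine Nat.card_le_card_of_injective
      (fun R => (⟨fun i => R.1 (Fin.castAdd j i), h _ R.2⟩, fun i => R.1 (Fin.natAdd m i)))
      fun R R' hR => Subtype.ext (funext fun i => ?_)
    rw [Prod.mk.injEq, Subtype.mk.injEq] at hR
    induction i using Fin.addCases with
    | left i => exact congrFun hR.1 i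
    | right i => exact congrFun hR.2 i
  have hpos' : (0 : ℝ) < Nat.card (ReducedWord n l) := by exact_mod_cast hpos
  rw [wordProb, wordProb, div_le_div_iff₀ (by positivity) (by positivity), pow_add]
  calc _ ≤ _ := mul_le_mul_of_nonneg_right (Nat.cast_le.2 hle) (by positivity)
    _ = _ := by push_cast; ring

/-- If every fibre of the words of length `l` over a group `Q` has at most `M` elements, then the
tuples of words mapping into a set of tuples in `B ≤ Q` can be counted accordingly. -/
lemma card_tuples_le {Q : Type*} [Group Q] [Finite Q] (q : FreeGroup (Fin n) →* Q)
    (B : Subgroup Q) {l m : ℕ} {M : ℝ}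
    (hM : ∀ g, (Nat.card {w : ReducedWord n l // q (FreeGroup.mk w.1) = g} : ℝ) ≤ M)
    {P : (Fin m → Q) → Prop} :
    (Nat.card {R : Fin m → ReducedWord n l // (∀ i, q (FreeGroup.mk (R i).1) ∈ B) ∧
      P fun i => q (FreeGroup.mk (R i).1)} : ℝ) ≤
      Nat.card {v : Fin m → B // P fun i => (v i : Q)} * M ^ m := by
  classical
  have := Fintype.ofFinite {v : Fin m → B // P fun i => (v i : Q)}
  have hle : Nat.card {R : Fin m → ReducedWord n l // (∀ i, q (FreeGroup.mk (R i).1) ∈ B) ∧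
      P fun i => q (FreeGroup.mk (R i).1)} ≤
      Nat.card (Σ v : {v : Fin m → B // P fun i => (v i : Q)},
        ∀ i, {w : ReducedWord n l // q (FreeGroup.mk w.1) = v.1 i}) := by
    refine Nat.card_le_card_of_injective
      (fun R => ⟨⟨fun i => ⟨_, R.2.1 i⟩, R.2.2⟩, fun i => ⟨R.1 i, rfl⟩⟩) ?_
    intro R R' h
    refine Subtype.ext (funext fun i => ?_)
    exact congrArg (fun x : (Σ v : {v : Fin m → B // P fun i => (v i : Q)},
        ∀ i, {w : ReducedWord n l // q (FreeGroup.mk w.1) = v.1 i}) => (x.2 i).1) h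
  refine (Nat.cast_le.2 hle).trans ?_
  rw [Nat.card_sigma, Nat.cast_sum, Nat.card_eq_fintype_card, ← Finset.card_univ, ← nsmul_eq_mul]
  refine Finset.sum_le_card_nsmul _ _ _ fun v _ => ?_
  rw [Nat.card_pi, Nat.cast_prod]
  exact (Finset.prod_le_prod (fun _ _ => by positivity) fun i _ => hM _).trans_eq (by simp)

end RandomWords

section RelationModule

open scoped commutatorElement

/-- The subgroup `[K, K] K ^ p` generated by the commutators and the `p`-th powers of `K`. -/
def commPow {F : Type*} [Group F] (K : Subgroup F) (p : ℕ) : Subgroup F :=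
  ⁅K, K⁆ ⊔ Subgroup.normalClosure ((fun x => x ^ p) '' (K : Set F))

variable {F : Type*} [Group F] (K : Subgroup F) [K.Normal] (p : ℕ)

instance commPow_normal : (commPow K p).Normal := by
  unfold commPow; infer_instance

lemma commPow_le : commPow K p ≤ K := by
  refine sup_le (Subgroup.commutator_le_left K K) (Subgroup.normalClosure_le_normal ?_)
  rintro _ ⟨x, hx, rfl⟩
  exact K.pow_mem hx p

lemma map_commPow_mul_comm (a b : K.map (QuotientGroup.mk' (commPow K p))) : a * b = b * a := by
  obtain ⟨_, a, ha, rfl⟩ := a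
  obtain ⟨_, b, hb, rfl⟩ := b
  refine Subtype.ext ?_
  change QuotientGroup.mk' (commPow K p) a * QuotientGroup.mk' (commPow K p) b =
    QuotientGroup.mk' (commPow K p) b * QuotientGroup.mk' (commPow K p) a
  rw [← commutatorElement_eq_one_iff_mul_comm, ← map_commutatorElement, ← MonoidHom.mem_ker,
    QuotientGroup.ker_mk']
  exact Subgroup.mem_sup_left (Subgroup.commutator_mem_commutator ha hb)

lemma map_commPow_pow (a : K.map (QuotientGroup.mk' (commPow K p))) : a ^ p = 1 := by
  obtain ⟨_, a, ha, rfl⟩ := a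
  refine Subtype.ext ?_
  change QuotientGroup.mk' (commPow K p) a ^ p = 1
  rw [← map_pow, ← MonoidHom.mem_ker, QuotientGroup.ker_mk']
  exact Subgroup.mem_sup_right (Subgroup.subset_normalClosure ⟨a, ha, rfl⟩)

lemma finite_map_commPow [Group.FG K] (hp : p ≠ 0) :
    Finite (K.map (QuotientGroup.mk' (commPow K p))) := by
  let _ : CommGroup (K.map (QuotientGroup.mk' (commPow K p))) :=
    { (inferInstance : Group (K.map (QuotientGroup.mk' (commPow K p)))) with
      mul_comm := map_commPow_mul_comm K p }
  have : Group.FG (K.map (QuotientGroup.mk' (commPow K p))) :=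
    Group.fg_of_surjective ((QuotientGroup.mk' (commPow K p)).subgroupMap_surjective K)
  exact CommGroup.finite_of_fg_isMulTorsion _ fun a =>
    isOfFinOrder_iff_pow_eq_one.2 ⟨p, Nat.pos_of_ne_zero hp, map_commPow_pow K p a⟩

lemma finite_quotient_commPow [Group.FG K] [Finite (F ⧸ K)] (hp : p ≠ 0) :
    Finite (F ⧸ commPow K p) := by
  have := finite_map_commPow K p hp
  let g : F ⧸ commPow K p →* F ⧸ K := QuotientGroup.map _ _ (MonoidHom.id F) (commPow_le K p)
  refine g.finite_iff_finite_ker_range.2 ⟨?_, inferInstance⟩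
  have hle : g.ker ≤ K.map (QuotientGroup.mk' (commPow K p)) := by
    intro x hx
    obtain ⟨x, rfl⟩ := QuotientGroup.mk'_surjective _ x
    exact ⟨x, (QuotientGroup.eq_one_iff x).1 hx, rfl⟩
  exact Finite.of_injective _ (Subgroup.inclusion_injective hle)

/-- A tuple generates `K` modulo `[K, K] K ^ p` if and only if its image has the image of `K` as
its normal closure. -/
lemma normalClosure_map_eq_iff {m : ℕ} (v : Fin m → F) :
    Subgroup.normalClosure (Set.range fun i => QuotientGroup.mk' (commPow K p) (v i)) =
        K.map (QuotientGroup.mk' (commPow K p)) ↔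
      Subgroup.normalClosure (Set.range v) ⊔ commPow K p = K := by
  have hrange : (Set.range fun i => QuotientGroup.mk' (commPow K p) (v i)) =
      QuotientGroup.mk' (commPow K p) '' Set.range v := by
    rw [← Set.range_comp]
    rfl
  rw [hrange, ← Subgroup.map_normalClosure _ _ (QuotientGroup.mk'_surjective _),
    Subgroup.map_eq_map_iff, QuotientGroup.ker_mk', sup_eq_left.2 (commPow_le K p)]

/-- A surjection onto an extension by a free abelian group that kills a tuple prevents it from
generating `K` modulo `[K, K] K ^ p`. -/
lemma normalClosure_sup_commPow_ne {G J : Type*} [Group G] [Group J] {f : F →* J} {π : G →* J}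
    {ψ : F →* G} (hψ : Function.Surjective ψ) (hf : π.comp ψ = f) {ι : Type*} [Nonempty ι]
    (e : (π.ker : Subgroup G) ≃* Multiplicative (FreeAbelianGroup ι)) (hp : p ≠ 1)
    {m : ℕ} {v : Fin m → F} (hv : ∀ i, ψ (v i) = 1) :
    Subgroup.normalClosure (Set.range v) ⊔ commPow f.ker p ≠ f.ker := by
  have : Nontrivial (ZMod p) := ZMod.nontrivial_iff.2 hp
  have hker (x : F) : ψ x ∈ π.ker ↔ x ∈ f.ker := by
    rw [MonoidHom.mem_ker, MonoidHom.mem_ker, ← hf, MonoidHom.comp_apply]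
  let χ : π.ker →* Multiplicative (ZMod p) :=
    (AddMonoidHom.toMultiplicative (FreeAbelianGroup.lift fun _ : ι => (1 : ZMod p))).comp
      e.toMonoidHom
  let L : Subgroup F := (χ.ker.map π.ker.subtype).comap ψ
  have hle : Subgroup.normalClosure (Set.range v) ⊔ commPow f.ker p ≤ L := by
    refine sup_le ?_ (sup_le ?_ ?_)
    · have h1 : Subgroup.normalClosure (Set.range v) ≤ ψ.ker :=
        Subgroup.normalClosure_le_normal (by rintro _ ⟨i, rfl⟩; exact hv i)
      refine h1.trans fun x hx => ?_
      change ψ x ∈ χ.ker.map π.ker.subtype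
      rw [MonoidHom.mem_ker.1 hx]
      exact Subgroup.one_mem _
    · refine Subgroup.commutator_le.2 fun a ha b hb => ?_
      let a' : π.ker := ⟨ψ a, (hker a).2 ha⟩
      let b' : π.ker := ⟨ψ b, (hker b).2 hb⟩
      have hab : ψ ⁅a, b⁆ = ((⁅a', b'⁆ : π.ker) : G) := by
        rw [map_commutatorElement]
        rfl
      refine ⟨⁅a', b'⁆, ?_, hab.symm⟩
      change χ _ = 1
      rw [map_commutatorElement, commutatorElement_eq_one_iff_mul_comm, mul_comm]
    · rw [Subgroup.normalClosure, Subgroup.closure_le]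
      intro y hy
      obtain ⟨_, ⟨x, hx, rfl⟩, hy⟩ := Group.mem_conjugatesOfSet_iff.1 hy
      obtain ⟨g, rfl⟩ := isConj_iff.1 hy
      have hgx : ψ (g * x * g⁻¹) ∈ π.ker :=
        (hker _).2 ((inferInstance : f.ker.Normal).conj_mem x hx g)
      have hpow : ψ (g * x ^ p * g⁻¹) = (((⟨ψ (g * x * g⁻¹), hgx⟩ : π.ker) ^ p : π.ker) : G) := by
        rw [← conj_pow, map_pow]
        rfl
      refine ⟨⟨ψ (g * x * g⁻¹), hgx⟩ ^ p, ?_, hpow.symm⟩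
      change χ _ = 1
      rw [map_pow]
      exact Multiplicative.toAdd.injective (by simp)
  intro heq
  rw [heq] at hle
  obtain ⟨x, hx⟩ := hψ (e.symm (Multiplicative.ofAdd
    (FreeAbelianGroup.of (Classical.arbitrary ι))))
  obtain ⟨y, hy, hyx⟩ := hle ((hker x).1 (hx ▸ Subtype.property _))
  obtain rfl : y = _ := Subtype.ext (hyx.trans hx)
  have h1 : χ (e.symm (Multiplicative.ofAdd (FreeAbelianGroup.of (Classical.arbitrary ι)))) =
      Multiplicative.ofAdd (1 : ZMod p) := by
    simp [χ]
  rw [MonoidHom.mem_ker.1 (show _ ∈ χ.ker from hy)] at h1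
  exact zero_ne_one (Multiplicative.ofAdd.injective h1)

end RelationModule

/-- The probability that `m` random words of length `l` lie in `K = ker f` but fail to generate it
modulo `[K, K] K ^ p` is eventually bounded by a constant multiple of `1 / p`. -/
lemma eventually_wordProb_not_generate_le {n : ℕ} (hn : 2 ≤ n) {J : Type*} [Group J] [Finite J]
    (f : FreeGroup (Fin n) →* J) [Group.FG f.ker] {m : ℕ} {v : Fin m → FreeGroup (Fin n)}
    (hv : GeneratesRelModule f v) (p : ℕ) [hp : Fact p.Prime] :
    ∀ᶠ l in atTop, wordProb n l m (fun R => (∀ i, R i ∈ f.ker) ∧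
      Subgroup.normalClosure (Set.range R) ⊔ commPow f.ker p ≠ f.ker) ≤
        (Group.rank f.ker * (8 * n + 1) ^ m : ℝ) / p := by
  have : Finite (FreeGroup (Fin n) ⧸ f.ker) :=
    Finite.of_injective _ (QuotientGroup.kerLift_injective f)
  have := finite_quotient_commPow f.ker p hp.out.ne_zero
  set q := QuotientGroup.mk' (commPow f.ker p)
  have hqs : Function.Surjective q := QuotientGroup.mk'_surjective _
  set B := f.ker.map q with hB
  have : B.Normal := Subgroup.Normal.map inferInstance q hqs
  have hBpos : (0 : ℝ) < Nat.card B := by exact_mod_cast Nat.card_pos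
  have hBQ : (Nat.card B : ℝ) ≤ Nat.card (FreeGroup (Fin n) ⧸ commPow f.ker p) := by
    exact_mod_cast Subgroup.card_le_card_group B
  have hp0 : (0 : ℝ) < p := by exact_mod_cast hp.out.pos
  have hrank : Group.rank B ≤ Group.rank f.ker :=
    Group.rank_le_of_surjective _ (q.subgroupMap_surjective f.ker)
  have hgen : Subgroup.normalClosure (Set.range fun i => q (v i)) = B := by
    rw [hB, normalClosure_map_eq_iff f.ker p v]
    refine le_antisymm (sup_le (Subgroup.normalClosure_le_normal ?_) (commPow_le _ _)) ?_
    · rintro _ ⟨i, rfl⟩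
      exact hv.1 i
    · conv_lhs => rw [← hv.2]
      exact sup_le_sup_left le_sup_left _
  have hbad := card_normalClosure_ne_le p B (map_commPow_mul_comm f.ker p)
    (map_commPow_pow f.ker p) (fun i => ⟨q (v i), Subgroup.mem_map_of_mem q (hv.1 i)⟩) hgen
  filter_upwards [eventually_card_fiber_le hn hqs (inv_pos.2 hBpos)] with l hl
  have hS : (0 : ℝ) < Nat.card (ReducedWord n l) := by
    have h1 : 0 < 2 * n - 1 := by omega
    have h2 := pow_le_card_reducedWord l ((⟨0, by omega⟩, true) : Fin n × Bool)
    exact_mod_cast (pow_pos h1 l).trans_le h2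
  have hcount := card_tuples_le q B hl (m := m)
    (P := fun v => Subgroup.normalClosure (Set.range v) ≠ B)
  have hsub : (Nat.card {R : Fin m → ReducedWord n l // (∀ i, FreeGroup.mk (R i).1 ∈ f.ker) ∧
      Subgroup.normalClosure (Set.range fun i => FreeGroup.mk (R i).1) ⊔ commPow f.ker p ≠ f.ker}) ≤
      Nat.card {R : Fin m → ReducedWord n l // (∀ i, q (FreeGroup.mk (R i).1) ∈ B) ∧
        Subgroup.normalClosure (Set.range fun i => q (FreeGroup.mk (R i).1)) ≠ B} :=
    Nat.card_le_card_of_injective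
      (fun R => ⟨R.1, fun i => Subgroup.mem_map_of_mem q (R.2.1 i),
        fun h => R.2.2 ((normalClosure_map_eq_iff f.ker p _).1 h)⟩)
      fun R R' h => Subtype.ext (Subtype.mk.inj h)
  rw [wordProb, div_le_div_iff₀ (by positivity) hp0]
  have hconst : (Nat.card B : ℝ) * (8 * n / Nat.card (FreeGroup (Fin n) ⧸ commPow f.ker p) +
      (Nat.card B : ℝ)⁻¹) ≤ 8 * n + 1 := by
    rw [mul_add, mul_inv_cancel₀ hBpos.ne', mul_div_assoc']
    gcongr
    rw [div_le_iff₀ (hBpos.trans_le hBQ), mul_comm]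
    gcongr
  calc _ ≤ _ := mul_le_mul_of_nonneg_right ((Nat.cast_le.2 hsub).trans hcount) hp0.le
    _ = ((p * Nat.card {v : Fin m → B //
          Subgroup.normalClosure (Set.range fun i => (v i : _ ⧸ commPow f.ker p)) ≠ B} : ℕ) : ℝ) *
        ((8 * n / Nat.card (FreeGroup (Fin n) ⧸ commPow f.ker p) + (Nat.card B : ℝ)⁻¹) *
          Nat.card (ReducedWord n l)) ^ m := by push_cast; ring
    _ ≤ ((Group.rank f.ker * Nat.card B ^ m : ℕ) : ℝ) *
        ((8 * n / Nat.card (FreeGroup (Fin n) ⧸ commPow f.ker p) + (Nat.card B : ℝ)⁻¹) *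
          Nat.card (ReducedWord n l)) ^ m := by
        refine mul_le_mul_of_nonneg_right (Nat.cast_le.2 ?_) (by positivity)
        exact hbad.trans (Nat.mul_le_mul_right _ hrank)
    _ = Group.rank f.ker * ((Nat.card B : ℝ) *
        (8 * n / Nat.card (FreeGroup (Fin n) ⧸ commPow f.ker p) + (Nat.card B : ℝ)⁻¹)) ^ m *
          Nat.card (ReducedWord n l) ^ m := by
        simp only [mul_pow, Nat.cast_mul, Nat.cast_pow]
        ring
    _ ≤ _ := by gcongr

/-- Let `J` be a finite group, `f : F → J` a surjection from the free group on `n` generators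
with kernel `K`, and let `m = d_F(K; ℤ)` be the minimal number of elements of `K` whose images
generate `K^{ab}` as a `J`-module.  Let `G` be an extension of `J` by a nontrivial free abelian
group `A = ker (G → J)`.  Then the probability that the random group on at least `m` relators of
length `l` admits a surjection onto `G` carrying `f` tends to `0` as `l → ∞`. -/
theorem random_group_no_fixed_virtually_abelian_quotient
    (n : ℕ) (hn : 2 ≤ n) (J : Type*) [Group J] [Finite J]
    (f : FreeGroup (Fin n) →* J) (hf : Function.Surjective f)
    (m : ℕ) (hm : IsLeast {k | ∃ v : Fin k → FreeGroup (Fin n), GeneratesRelModule f v} m)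
    (G : Type*) [Group G] (π : G →* J) (hπ : Function.Surjective π)
    (ι : Type*) [Nonempty ι]
    (hA : Nonempty ((π.ker : Subgroup G) ≃* Multiplicative (FreeAbelianGroup ι)))
    (ρ : ℕ → ℕ) (hρ : ∀ l, m ≤ ρ l) :
    Tendsto (fun l => wordProb n l (ρ l) fun R =>
        ∃ φ : (FreeGroup (Fin n) ⧸ Subgroup.normalClosure (Set.range R)) →* G,
          Function.Surjective φ ∧
          π.comp (φ.comp (QuotientGroup.mk' (Subgroup.normalClosure (Set.range R)))) = f)
      atTop (nhds 0) := by
  obtain ⟨⟨v, hv⟩, -⟩ := hm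
  obtain ⟨e⟩ := hA
  refine tendsto_order.2 ⟨fun a ha => Eventually.of_forall fun l => ha.trans_le ?_, fun ε hε => ?_⟩
  · unfold wordProb
    positivity
  obtain ⟨N, hN⟩ := exists_nat_gt ((Group.rank f.ker * (8 * n + 1) ^ m : ℝ) / ε)
  obtain ⟨p, hNp, hp⟩ := Nat.exists_infinite_primes N
  have : Fact p.Prime := ⟨hp⟩
  have hbound : (Group.rank f.ker * (8 * n + 1) ^ m : ℝ) / p < ε := by
    have hp0 : (0 : ℝ) < p := by exact_mod_cast hp.pos
    rw [div_lt_comm₀ hp0 hε]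
    exact hN.trans_le (by exact_mod_cast hNp)
  filter_upwards [eventually_wordProb_not_generate_le hn f hv p] with l hl
  refine lt_of_le_of_lt ?_ hbound
  refine le_trans ?_ hl
  obtain ⟨j, hj⟩ := Nat.exists_eq_add_of_le (hρ l)
  rw [hj]
  refine wordProb_le_of_imp ?_ ?_
  · have h1 : 0 < 2 * n - 1 := by omega
    exact (pow_pos h1 l).trans_le
      (pow_le_card_reducedWord l ((⟨0, by omega⟩, true) : Fin n × Bool))
  · rintro R ⟨φ, hφ, hφf⟩
    have hker (i : Fin (m + j)) :
        φ (QuotientGroup.mk' (Subgroup.normalClosure (Set.range R)) (R i)) = 1 := by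
      have : QuotientGroup.mk' (Subgroup.normalClosure (Set.range R)) (R i) = 1 :=
        (QuotientGroup.eq_one_iff _).2 (Subgroup.subset_normalClosure (Set.mem_range_self i))
      rw [this, map_one]
    refine ⟨fun i => ?_, ?_⟩
    · rw [MonoidHom.mem_ker, ← hφf, MonoidHom.comp_apply, MonoidHom.comp_apply, hker, map_one]
    · exact normalClosure_sup_commPow_ne p
        (ψ := φ.comp (QuotientGroup.mk' (Subgroup.normalClosure (Set.range R))))
        (hφ.comp (QuotientGroup.mk'_surjective _)) hφf e hp.ne_one fun i => hker _
end

section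
/- Let G be a finite group and X → G a function whose image generates G. Suppose there is no subgroup H ≤ G of index 2 with x_i ∉ H for all i ∈ {1,…,n}. Then for every g ∈ G, the proportion |{w ∈ S_l : w =_G g}| / |S_l| of reduced words of length l evaluating to g converges to 1/|G| as l → ∞. -/
open Filter

/-- Words in the alphabet `X ∪ X⁻¹` with `X = {x_1, …, x_n}` are lists of letters `(i, b)`,
the letter being `x_i` if `b = true` and `x_i⁻¹` if `b = false`.  `evalWord φ w` is the image
of the word `w` in `G` under the homomorphism `F(X) → G` induced by `φ : X → G`. -/
def evalWord {n : ℕ} {G : Type*} [Group G] (φ : Fin n → G) (w : List (Fin n × Bool)) : G :=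
  FreeGroup.lift φ (FreeGroup.mk w)

/-- The letter inverse to a given one. -/
def invLetter {n : ℕ} : Equiv.Perm (Fin n × Bool) := (Equiv.refl _).prodCongr Equiv.boolNot

/-- The number of reduced words of length `l` evaluating to `g`. -/
noncomputable def reducedCount {n : ℕ} {G : Type*} [Group G] (φ : Fin n → G) (l : ℕ) (g : G) : ℕ :=
  Nat.card {w : List (Fin n × Bool) //
    FreeGroup.reduce w = w ∧ w.length = l ∧ evalWord φ w = g}

/-- The number of reduced words of length `l + 1` with first letter `a` evaluating to `g`. -/
noncomputable def reducedConsCount {n : ℕ} {G : Type*} [Group G] (φ : Fin n → G)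
    (a : Fin n × Bool) (l : ℕ) (g : G) : ℕ :=
  Nat.card {w : List (Fin n × Bool) //
    w.length = l ∧ FreeGroup.reduce (a :: w) = a :: w ∧ evalWord φ (a :: w) = g}

lemma invLetter_invLetter {n : ℕ} (a : Fin n × Bool) : invLetter (invLetter a) = a :=
  Prod.ext rfl (Bool.not_not a.2)

lemma finite_list_length_and {α : Type*} [Finite α] (l : ℕ) (p : List α → Prop) :
    Finite {w : List α // w.length = l ∧ p w} :=
  ((List.finite_length_eq α l).subset fun _ h => h.1).to_subtype

lemma card_list_length_succ {α : Type*} [Fintype α] (l : ℕ) (p : List α → Prop) :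
    Nat.card {w : List α // w.length = l + 1 ∧ p w} =
      ∑ a, Nat.card {w : List α // w.length = l ∧ p (a :: w)} := by
  have := fun a : α => finite_list_length_and l fun w => p (a :: w)
  rw [← Nat.card_sigma]
  refine (Nat.card_congr (Equiv.ofBijective
    (fun x : Σ a, {w : List α // w.length = l ∧ p (a :: w)} =>
      (⟨x.1 :: x.2.1, by simp [x.2.2.1], x.2.2.2⟩ : {w : List α // w.length = l + 1 ∧ p w}))
    ⟨?_, ?_⟩)).symm
  · rintro ⟨a, w, hw⟩ ⟨b, v, hv⟩ h
    simp only [Subtype.mk.injEq, List.cons.injEq] at h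
    obtain ⟨rfl, rfl⟩ := h
    rfl
  · rintro ⟨w, hw, hp⟩
    cases w with
    | nil => simp at hw
    | cons a w => exact ⟨⟨a, w, by simpa using hw, hp⟩, rfl⟩

section Counting

variable {n : ℕ} {G : Type*} [Group G] (φ : Fin n → G)

lemma evalWord_cons (a : Fin n × Bool) (w : List (Fin n × Bool)) :
    evalWord φ (a :: w) = evalWord φ [a] * evalWord φ w := by
  simp [evalWord, FreeGroup.lift_mk]

lemma evalWord_invLetter (a : Fin n × Bool) :
    evalWord φ [invLetter a] = (evalWord φ [a])⁻¹ := by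
  obtain ⟨i, b⟩ := a
  cases b <;> simp [evalWord, FreeGroup.lift_mk, invLetter]

lemma reduce_cons_cons_iff (a b : Fin n × Bool) (w : List (Fin n × Bool)) :
    FreeGroup.reduce (a :: b :: w) = a :: b :: w ↔
      b ≠ invLetter a ∧ FreeGroup.reduce (b :: w) = b :: w := by
  rw [← FreeGroup.isReduced_iff_reduce_eq, ← FreeGroup.isReduced_iff_reduce_eq,
    FreeGroup.IsReduced, List.isChain_cons_cons]
  refine and_congr ?_ Iff.rfl
  obtain ⟨i, b⟩ := b
  obtain ⟨j, c⟩ := a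
  cases b <;> cases c <;> simp [invLetter, eq_comm]

lemma reducedCount_succ (l : ℕ) (g : G) :
    reducedCount φ (l + 1) g = ∑ a, reducedConsCount φ a l g := by
  unfold reducedConsCount
  rw [← card_list_length_succ l fun w => FreeGroup.reduce w = w ∧ evalWord φ w = g]
  exact Nat.card_congr (Equiv.subtypeEquivRight fun w => and_left_comm)

lemma reducedConsCount_succ (a : Fin n × Bool) (l : ℕ) (g : G) :
    reducedConsCount φ a (l + 1) g =
      ∑ b ∈ Finset.univ.erase (invLetter a), reducedConsCount φ b l ((evalWord φ [a])⁻¹ * g) := by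
  unfold reducedConsCount
  rw [card_list_length_succ l fun w => FreeGroup.reduce (a :: w) = a :: w ∧
    evalWord φ (a :: w) = g, ← Finset.add_sum_erase _ _ (Finset.mem_univ (invLetter a))]
  simp only [reduce_cons_cons_iff, ne_eq, not_true_eq_false, false_and, and_false,
    Nat.card_of_isEmpty, zero_add]
  refine Finset.sum_congr rfl fun b hb => Nat.card_congr (Equiv.subtypeEquivRight fun w => ?_)
  simp [Finset.ne_of_mem_erase hb, evalWord_cons φ a (b :: w), eq_inv_mul_iff_mul_eq]

lemma reducedConsCount_succ_add (a : Fin n × Bool) (l : ℕ) (g : G) :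
    reducedConsCount φ a (l + 1) g + reducedConsCount φ (invLetter a) l ((evalWord φ [a])⁻¹ * g) =
      reducedCount φ (l + 1) ((evalWord φ [a])⁻¹ * g) := by
  rw [reducedCount_succ, reducedConsCount_succ, Finset.sum_erase_add _ _ (Finset.mem_univ _)]

/-- The three-term recurrence for the numbers of reduced words evaluating to given elements. -/
lemma reducedCount_recurrence (l : ℕ) (g : G) :
    (reducedCount φ (l + 3) g : ℝ) =
      ∑ a, (reducedCount φ (l + 2) ((evalWord φ [a])⁻¹ * g) : ℝ) -
        (2 * n - 1) * reducedCount φ (l + 1) g := by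
  have h (a : Fin n × Bool) : (reducedConsCount φ a (l + 2) g : ℝ) =
      reducedCount φ (l + 2) ((evalWord φ [a])⁻¹ * g) - reducedCount φ (l + 1) g +
        reducedConsCount φ a l g := by
    have h1 := reducedConsCount_succ_add φ a (l + 1) g
    have h2 := reducedConsCount_succ_add φ (invLetter a) l ((evalWord φ [a])⁻¹ * g)
    simp only [invLetter_invLetter, evalWord_invLetter, inv_inv, mul_inv_cancel_left] at h2
    have h3 : (_ : ℝ) = _ := congrArg Nat.cast h1
    have h4 : (_ : ℝ) = _ := congrArg Nat.cast h2
    push_cast at h3 h4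
    linarith
  rw [reducedCount_succ φ (l + 2) g]
  push_cast
  simp_rw [h, Finset.sum_add_distrib, Finset.sum_sub_distrib]
  rw [reducedCount_succ φ l]
  simp
  ring

variable [Fintype G]

lemma sum_reducedConsCount (a : Fin n × Bool) (l : ℕ) :
    ∑ g, reducedConsCount φ a l g = (2 * n - 1) ^ l := by
  induction l generalizing a with
  | zero =>
    classical
    have h (g : G) : reducedConsCount φ a 0 g = if evalWord φ [a] = g then 1 else 0 := by
      unfold reducedConsCount
      have : ∀ w : List (Fin n × Bool), (w.length = 0 ∧ FreeGroup.reduce (a :: w) = a :: w ∧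
          evalWord φ (a :: w) = g) ↔ (evalWord φ [a] = g ∧ w = []) := by
        intro w
        rw [List.length_eq_zero_iff]
        constructor
        · rintro ⟨rfl, -, h⟩
          exact ⟨h, rfl⟩
        · rintro ⟨h, rfl⟩
          exact ⟨rfl, rfl, h⟩
      simp only [this]
      split_ifs with h <;> simp [h]
    simp [h]
  | succ l ih =>
    simp_rw [reducedConsCount_succ]
    rw [Finset.sum_comm]
    have h (b : Fin n × Bool) :
        ∑ g, reducedConsCount φ b l ((evalWord φ [a])⁻¹ * g) = (2 * n - 1) ^ l := by
      rw [← ih b]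
      exact Equiv.sum_comp (Equiv.mulLeft (evalWord φ [a])⁻¹) (reducedConsCount φ b l)
    simp [h, pow_succ', mul_comm n 2]

lemma sum_reducedCount (l : ℕ) :
    ∑ g, reducedCount φ (l + 1) g = 2 * n * (2 * n - 1) ^ l := by
  simp_rw [reducedCount_succ]
  rw [Finset.sum_comm]
  simp [sum_reducedConsCount, mul_comm n 2]

lemma card_reduced (l : ℕ) :
    Nat.card {w : List (Fin n × Bool) // FreeGroup.reduce w = w ∧ w.length = l} =
      ∑ g, reducedCount φ l g := by
  have h (g : G) : reducedCount φ l g = Nat.card {w : {w : List (Fin n × Bool) //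
      FreeGroup.reduce w = w ∧ w.length = l} // evalWord φ w.1 = g} := by
    refine Nat.card_congr (Equiv.trans (Equiv.subtypeEquivRight fun w => ?_)
      (Equiv.subtypeSubtypeEquivSubtypeInter _ (fun w => evalWord φ w = g)).symm)
    exact and_assoc.symm
  have : Finite {w : List (Fin n × Bool) // FreeGroup.reduce w = w ∧ w.length = l} :=
    ((List.finite_length_eq _ l).subset fun _ h => h.2).to_subtype
  simp_rw [h]
  rw [← Nat.card_sigma]
  exact Nat.card_congr (Equiv.sigmaFiberEquiv _).symm

end Counting

section Averaging

open Topology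

variable {E : Type*} [NormedAddCommGroup E] [InnerProductSpace ℝ E]

/-- The quantity `‖x (l + 1)‖² + ‖x l‖² - 2 ⟪P (x (l + 1)), x l⟫` is a Lyapunov function for the
recurrence `x (l + 2) = (1 + b) P (x (l + 1)) - b x l`. -/
lemma tendsto_sub_apply_of_recurrence (P : E →L[ℝ] E)
    (hsymm : ∀ x y, inner ℝ (P x) y = inner ℝ x (P y)) (hP : ∀ x, ‖P x‖ ≤ ‖x‖)
    {b : ℝ} (hb : 0 ≤ b) (hb1 : b < 1) (x : ℕ → E)
    (hx : ∀ l, x (l + 2) = (1 + b) • P (x (l + 1)) - b • x l) :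
    Tendsto (fun l => x l - P (x (l + 1))) atTop (𝓝 0) := by
  let V : ℕ → ℝ := fun l => ‖x (l + 1)‖ ^ 2 + ‖x l‖ ^ 2 - 2 * inner ℝ (P (x (l + 1))) (x l)
  have hV0 (l : ℕ) : 0 ≤ V l := by
    have h1 := real_inner_le_norm (P (x (l + 1))) (x l)
    have h2 := mul_le_mul_of_nonneg_right (hP (x (l + 1))) (norm_nonneg (x l))
    simp only [V]
    nlinarith [sq_nonneg (‖x (l + 1)‖ - ‖x l‖)]
  have hV (l : ℕ) : V (l + 1) = V l - (1 - b ^ 2) * ‖x l - P (x (l + 1))‖ ^ 2 := by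
    simp only [V]
    rw [hsymm (x (l + 1 + 1)), show x (l + 1 + 1) = _ from hx l]
    simp only [← real_inner_self_eq_norm_sq, inner_sub_left, inner_sub_right, inner_smul_left,
      inner_smul_right, RCLike.conj_to_real, real_inner_comm (P (x (l + 1))) (x l)]
    ring
  have hc : 0 < 1 - b ^ 2 := by nlinarith
  have hsum (l : ℕ) :
      ∑ i ∈ Finset.range l, (1 - b ^ 2) * ‖x i - P (x (i + 1))‖ ^ 2 = V 0 - V l := by
    induction l with
    | zero => simp
    | succ l ih => rw [Finset.sum_range_succ, ih, hV]; ring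
  have h := (summable_of_sum_range_le (c := V 0)
    (fun i => mul_nonneg hc.le (sq_nonneg ‖x i - P (x (i + 1))‖))
    (fun l => by rw [hsum]; linarith [hV0 l])).tendsto_atTop_zero
  have h2 := (h.const_mul (1 - b ^ 2)⁻¹).sqrt
  simp only [inv_mul_cancel_left₀ hc.ne', Real.sqrt_sq (norm_nonneg _), mul_zero,
    Real.sqrt_zero] at h2
  exact tendsto_zero_iff_norm_tendsto_zero.2 h2

lemma tendsto_sub_apply_apply_of_recurrence (P : E →L[ℝ] E)
    (hsymm : ∀ x y, inner ℝ (P x) y = inner ℝ x (P y)) (hP : ∀ x, ‖P x‖ ≤ ‖x‖)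
    {b : ℝ} (hb : 0 ≤ b) (hb1 : b < 1) (x : ℕ → E)
    (hx : ∀ l, x (l + 2) = (1 + b) • P (x (l + 1)) - b • x l) :
    Tendsto (fun l => x l - P (P (x l))) atTop (𝓝 0) := by
  have h := tendsto_sub_apply_of_recurrence P hsymm hP hb hb1 x hx
  have h1 := (P.continuous.tendsto 0).comp (h.comp (tendsto_add_atTop_nat 1))
  have h2 := (((P.comp P).continuous.tendsto 0).comp h).const_smul (1 + b)
  have h3 := (h.add h1).sub h2
  simp only [map_zero, smul_zero, add_zero, sub_zero] at h3
  refine h3.congr fun l => ?_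
  simp only [Function.comp_apply, ContinuousLinearMap.comp_apply, map_sub, hx l, map_smul]
  module

variable {ι : Type*} [Fintype ι] (U : ι → E ≃ₗᵢ[ℝ] E)

/-- The average of a finite family of linear isometries. -/
noncomputable def isometryAverage : E →L[ℝ] E :=
  (Fintype.card ι : ℝ)⁻¹ • ∑ i, ((U i).toContinuousLinearEquiv : E →L[ℝ] E)

lemma isometryAverage_apply (x : E) :
    isometryAverage U x = (Fintype.card ι : ℝ)⁻¹ • ∑ i, U i x := by
  simp [isometryAverage]

lemma norm_isometryAverage_apply_le [Nonempty ι] (x : E) : ‖isometryAverage U x‖ ≤ ‖x‖ := by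
  rw [isometryAverage_apply, norm_smul, norm_inv, Real.norm_natCast,
    inv_mul_le_iff₀ (by exact_mod_cast Fintype.card_pos)]
  exact (norm_sum_le _ _).trans (by simp)

lemma inner_isometryAverage_comm (σ : Equiv.Perm ι) (hσ : ∀ i, (U i).symm = U (σ i)) (x y : E) :
    inner ℝ (isometryAverage U x) y = inner ℝ x (isometryAverage U y) := by
  simp only [isometryAverage_apply, inner_smul_left, inner_smul_right, sum_inner, inner_sum,
    RCLike.conj_to_real]
  congr 1
  rw [← Equiv.sum_comp σ fun i => inner ℝ x (U i y)]
  refine Finset.sum_congr rfl fun i _ => ?_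
  rw [← hσ, ← (U i).inner_map_map x, LinearIsometryEquiv.apply_symm_apply]

/-- An eigenvector of an average of isometries with eigenvalue `±1` is an eigenvector of each of
the isometries. -/
lemma apply_eq_of_isometryAverage_apply_eq [Nonempty ι] {ε : ℝ} (hε : ε ^ 2 = 1) {x : E}
    (hx : isometryAverage U x = ε • x) (i : ι) : U i x = ε • x := by
  have hc : (Fintype.card ι : ℝ) ≠ 0 := by exact_mod_cast Fintype.card_ne_zero
  have hsum : ∑ i, U i x = (Fintype.card ι : ℝ) • ε • x := by
    rw [← hx, isometryAverage_apply, smul_inv_smul₀ hc]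
  have h : ∑ i, ‖U i x - ε • x‖ ^ 2 = 0 := by
    have h1 (i : ι) : ‖U i x - ε • x‖ ^ 2 = 2 * ‖x‖ ^ 2 - 2 * ε * inner ℝ (U i x) x := by
      rw [norm_sub_sq_real, LinearIsometryEquiv.norm_map, inner_smul_right, norm_smul, mul_pow,
        Real.norm_eq_abs, sq_abs, hε]
      ring
    simp_rw [h1]
    rw [Finset.sum_sub_distrib, ← Finset.mul_sum Finset.univ _ (2 * ε), ← sum_inner, hsum,
      inner_smul_left, inner_smul_left, real_inner_self_eq_norm_sq]
    simp only [Finset.sum_const, Finset.card_univ, nsmul_eq_mul, RCLike.conj_to_real]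
    linear_combination (-2 * Fintype.card ι * ‖x‖ ^ 2) * hε
  have := (Finset.sum_eq_zero_iff_of_nonneg fun i _ => sq_nonneg _).1 h i (Finset.mem_univ i)
  exact sub_eq_zero.1 (by simpa using this)

end Averaging

section Translation

open Topology

variable {n : ℕ} {G : Type*} [Group G] (φ : Fin n → G)

lemma apply_mul_eq_or_eq_neg (hgen : Subgroup.closure (Set.range φ) = ⊤) {h : G → ℝ}
    (hφ : ∀ i x, h (φ i * x) = -h x) (k : G) :
    (∀ x, h (k * x) = h x) ∨ ∀ x, h (k * x) = -h x := by
  have hk : k ∈ Subgroup.closure (Set.range φ) := hgen ▸ Subgroup.mem_top k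
  induction hk using Subgroup.closure_induction with
  | mem k hk =>
    obtain ⟨i, rfl⟩ := hk
    exact Or.inr (hφ i)
  | one => simp
  | mul a b _ _ ha hb =>
    rcases ha with ha | ha <;> rcases hb with hb | hb <;> simp [mul_assoc, ha, hb]
  | inv a _ ha =>
    refine ha.imp (fun ha x => ?_) fun ha x => ?_
    · simpa using (ha (a⁻¹ * x)).symm
    · simpa using (congrArg Neg.neg (ha (a⁻¹ * x))).symm

lemma eq_zero_of_apply_mul_eq_neg (hn : 0 < n) (hgen : Subgroup.closure (Set.range φ) = ⊤)
    (hnoH : ¬ ∃ H : Subgroup G, H.index = 2 ∧ ∀ i, φ i ∉ H) {h : G → ℝ}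
    (hφ : ∀ i x, h (φ i * x) = -h x) : h = 0 := by
  by_contra hne
  obtain ⟨x₀, hx₀⟩ := Function.ne_iff.1 hne
  have hx₀' : h x₀ ≠ -h x₀ := fun e => hx₀ (by simpa using self_eq_neg.1 e)
  let H : Subgroup G :=
    { carrier := {k | ∀ x, h (k * x) = h x}
      mul_mem' := fun {a b} ha hb x => by rw [mul_assoc, ha, hb]
      one_mem' := fun x => by rw [one_mul]
      inv_mem' := fun {a} ha x => by simpa using (ha (a⁻¹ * x)).symm }
  have hH (k : G) : k ∈ H ↔ ∀ x, h (k * x) = h x := Iff.rfl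
  refine hnoH ⟨H, Subgroup.index_eq_two_iff'.2 ⟨φ ⟨0, hn⟩, fun b => ?_⟩, fun i hi => ?_⟩
  · rcases apply_mul_eq_or_eq_neg φ hgen hφ b with hb | hb
    · refine Or.inr ⟨hb, fun hab => hx₀' ((hab x₀).symm.trans ?_)⟩
      rw [mul_assoc, hφ, hb]
    · refine Or.inl ⟨fun x => by rw [mul_assoc, hφ, hb, neg_neg], fun hb' => hx₀' ?_⟩
      rw [← hb, hb']
  · exact hx₀' (by rw [← hφ i, (hH _).1 hi])

lemma apply_eq_of_apply_mul_eq (hgen : Subgroup.closure (Set.range φ) = ⊤) {h : G → ℝ}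
    (hφ : ∀ i x, h (φ i * x) = h x) (k : G) : h k = h 1 := by
  have hk : k ∈ Subgroup.closure (Set.range φ) := hgen ▸ Subgroup.mem_top k
  suffices ∀ x, h (k * x) = h x by simpa using this 1
  induction hk using Subgroup.closure_induction with
  | mem k hk =>
    obtain ⟨i, rfl⟩ := hk
    exact hφ i
  | one => simp
  | mul a b _ _ ha hb => simp [mul_assoc, ha, hb]
  | inv a _ ha => exact fun x => by simpa using (ha (a⁻¹ * x)).symm

variable [Fintype G]

/-- Left translation by a letter, as an isometry of `ℓ²(G)`. -/
noncomputable def letterTranslation (a : Fin n × Bool) :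
    EuclideanSpace ℝ G ≃ₗᵢ[ℝ] EuclideanSpace ℝ G :=
  LinearIsometryEquiv.piLpCongrLeft 2 ℝ ℝ (Equiv.mulLeft (evalWord φ [a]))

lemma letterTranslation_apply (a : Fin n × Bool) (f : EuclideanSpace ℝ G) (g : G) :
    letterTranslation φ a f g = f ((evalWord φ [a])⁻¹ * g) := rfl

lemma letterTranslation_symm (a : Fin n × Bool) :
    (letterTranslation φ a).symm = letterTranslation φ (invLetter a) := by
  rw [letterTranslation, letterTranslation, LinearIsometryEquiv.piLpCongrLeft_symm,
    evalWord_invLetter, Equiv.mulLeft_symm]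

lemma letterTranslation_false_apply (i : Fin n) (f : EuclideanSpace ℝ G) (g : G) :
    letterTranslation φ (i, false) f g = f (φ i * g) := by
  simp [letterTranslation_apply, evalWord, FreeGroup.lift_mk]

/-- The simple random walk operator on `ℓ²(G)`. -/
noncomputable def walkOperator : EuclideanSpace ℝ G →L[ℝ] EuclideanSpace ℝ G :=
  isometryAverage (letterTranslation φ)

lemma walkOperator_apply (f : EuclideanSpace ℝ G) (g : G) :
    walkOperator φ f g = (2 * n : ℝ)⁻¹ * ∑ a, f ((evalWord φ [a])⁻¹ * g) := by
  simp [walkOperator, isometryAverage_apply, letterTranslation_apply, mul_comm (n : ℝ) 2]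

lemma sum_walkOperator (hn : 0 < n) (f : EuclideanSpace ℝ G) :
    ∑ g, walkOperator φ f g = ∑ g, f g := by
  have hn' : (n : ℝ) ≠ 0 := by exact_mod_cast hn.ne'
  have h (a : Fin n × Bool) : ∑ g, f ((evalWord φ [a])⁻¹ * g) = ∑ g, f g :=
    Equiv.sum_comp (Equiv.mulLeft (evalWord φ [a])⁻¹) f
  simp_rw [walkOperator_apply, ← Finset.mul_sum]
  rw [Finset.sum_comm]
  simp_rw [h]
  simp
  field_simp

lemma apply_mul_of_walkOperator_eq {ε : ℝ} (hε : ε ^ 2 = 1) {f : EuclideanSpace ℝ G}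
    (hf : walkOperator φ f = ε • f) (i : Fin n) (g : G) : f (φ i * g) = ε * f g := by
  have : Nonempty (Fin n × Bool) := ⟨(i, true)⟩
  rw [← letterTranslation_false_apply,
    apply_eq_of_isometryAverage_apply_eq (letterTranslation φ) hε hf]
  rfl

lemma eq_zero_of_walkOperator_walkOperator_eq (hn : 0 < n)
    (hgen : Subgroup.closure (Set.range φ) = ⊤)
    (hnoH : ¬ ∃ H : Subgroup G, H.index = 2 ∧ ∀ i, φ i ∉ H) {f : EuclideanSpace ℝ G}
    (hf : walkOperator φ (walkOperator φ f) = f) (hsum : ∑ g, f g = 0) : f = 0 := by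
  have hadd : walkOperator φ f + f = 0 := by
    have h1 : walkOperator φ (walkOperator φ f + f) = (1 : ℝ) • (walkOperator φ f + f) := by
      rw [map_add, hf, one_smul, add_comm]
    have h2 : ∑ g, (walkOperator φ f + f) g = 0 := by
      simp only [PiLp.add_apply, Finset.sum_add_distrib, sum_walkOperator φ hn, hsum, add_zero]
    generalize walkOperator φ f + f = h at h1 h2
    have hconst := apply_eq_of_apply_mul_eq φ hgen (h := h) fun i x => by
      rw [apply_mul_of_walkOperator_eq φ (one_pow 2) h1, one_mul]
    simp_rw [hconst] at h2
    ext g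
    rw [hconst]
    simpa using h2
  have hsub : walkOperator φ f - f = 0 := by
    have h1 : walkOperator φ (walkOperator φ f - f) = (-1 : ℝ) • (walkOperator φ f - f) := by
      rw [map_sub, hf]
      module
    generalize walkOperator φ f - f = h at h1
    have h2 := eq_zero_of_apply_mul_eq_neg φ hn hgen hnoH (h := h) fun i x => by
      rw [apply_mul_of_walkOperator_eq φ (by norm_num) h1, neg_one_mul]
    ext g
    exact congrFun h2 g
  have h : (2 : ℝ) • f = 0 := by
    rw [← sub_zero (0 : EuclideanSpace ℝ G)]
    nth_rw 1 [← hadd]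
    rw [← hsub]
    module
  simpa using h

/-- Any sequence with constant sum that is asymptotically fixed by the square of the walk operator
converges to the constant function. -/
lemma tendsto_of_sub_walkOperator_walkOperator (hn : 0 < n)
    (hgen : Subgroup.closure (Set.range φ) = ⊤)
    (hnoH : ¬ ∃ H : Subgroup G, H.index = 2 ∧ ∀ i, φ i ∉ H) (x : ℕ → EuclideanSpace ℝ G)
    (hx : Tendsto (fun l => x l - walkOperator φ (walkOperator φ (x l))) atTop (𝓝 0))
    (hsum : ∀ l, ∑ g, x l g = 1) (g : G) :
    Tendsto (fun l => x l g) atTop (𝓝 (1 / (Nat.card G : ℝ))) := by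
  let P := walkOperator φ
  let S : EuclideanSpace ℝ G →L[ℝ] ℝ := ∑ g, EuclideanSpace.proj g
  have hS (f : EuclideanSpace ℝ G) : S f = ∑ g, f g := by simp [S]
  let T : EuclideanSpace ℝ G →ₗ[ℝ] EuclideanSpace ℝ G × ℝ :=
    (LinearMap.id - (P.comp P : EuclideanSpace ℝ G →ₗ[ℝ] EuclideanSpace ℝ G)).prod S
  have hT (f : EuclideanSpace ℝ G) : T f = (f - P (P f), ∑ g, f g) := by
    rw [← hS]
    rfl
  have hker : LinearMap.ker T = ⊥ := by
    refine LinearMap.ker_eq_bot'.2 fun f hf => ?_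
    rw [hT, Prod.mk_eq_zero, sub_eq_zero] at hf
    exact eq_zero_of_walkOperator_walkOperator_eq φ hn hgen hnoH hf.1.symm hf.2
  obtain ⟨L, hL⟩ := T.exists_leftInverse_of_injective hker
  have hLT (f : EuclideanSpace ℝ G) : L (T f) = f := LinearMap.congr_fun hL f
  let u : EuclideanSpace ℝ G := WithLp.toLp 2 fun _ => 1 / (Nat.card G : ℝ)
  have hn' : (n : ℝ) ≠ 0 := by exact_mod_cast hn.ne'
  have hPu : P u = u := by
    ext g
    rw [walkOperator_apply]
    simp [u]
    field_simp
  have hTu : T u = (0, 1) := by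
    rw [hT, hPu, hPu, sub_self]
    simp [u]
  have hlim : Tendsto (fun l => T (x l)) atTop (𝓝 (T u)) := by
    simp_rw [hTu, hT, hsum]
    exact hx.prodMk_nhds tendsto_const_nhds
  have := (L.continuous_of_finiteDimensional.tendsto _).comp hlim
  simp only [Function.comp_def, hLT] at this
  let ev : EuclideanSpace ℝ G →L[ℝ] ℝ := EuclideanSpace.proj g
  exact (ev.continuous.tendsto u).comp this

end Translation

/-- Let `G` be a finite group and `φ : X → G` a function whose image generates `G`.  If there is
no index-2 subgroup `H ≤ G` avoiding all the `φ x_i`, then for every `g ∈ G` the proportion of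
reduced words of length `l` that evaluate to `g` in `G` converges to `1/|G|` as `l → ∞`. -/
theorem nonbacktracking_walk_equidistribution_aperiodic
    (n : ℕ) (hn : 2 ≤ n) (G : Type*) [Group G] [Finite G]
    (φ : Fin n → G) (hgen : Subgroup.closure (Set.range φ) = ⊤)
    (hnoH : ¬ ∃ H : Subgroup G, H.index = 2 ∧ ∀ i, φ i ∉ H)
    (g : G) :
    Tendsto (fun l =>
        (Nat.card {w : List (Fin n × Bool) //
            FreeGroup.reduce w = w ∧ w.length = l ∧ evalWord φ w = g} : ℝ) /
          (Nat.card {w : List (Fin n × Bool) //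
            FreeGroup.reduce w = w ∧ w.length = l} : ℝ))
      atTop (nhds (1 / (Nat.card G : ℝ))) := by
  have := Fintype.ofFinite G
  have hn0 : 0 < n := by omega
  have : Nonempty (Fin n × Bool) := ⟨(⟨0, hn0⟩, true)⟩
  have hnR : (2 : ℝ) ≤ n := by exact_mod_cast hn
  have hq : (0 : ℝ) < 2 * n - 1 := by linarith
  have hcast : ((2 * n - 1 : ℕ) : ℝ) = 2 * n - 1 := by
    rw [Nat.cast_sub (by omega)]
    push_cast
    rfl
  have hsum (l : ℕ) : ∑ g, (reducedCount φ (l + 1) g : ℝ) = 2 * n * (2 * n - 1) ^ l := by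
    rw [← hcast]
    exact_mod_cast sum_reducedCount φ l
  have hD (l : ℕ) : (2 * n * (2 * n - 1) ^ l : ℝ) ≠ 0 := by positivity
  let x : ℕ → EuclideanSpace ℝ G := fun l =>
    WithLp.toLp 2 fun g => (reducedCount φ (l + 1) g : ℝ) / (2 * n * (2 * n - 1) ^ l)
  have hx1 (l : ℕ) : ∑ g, x l g = 1 := by
    simp only [x]
    rw [← Finset.sum_div, hsum, div_self (hD l)]
  have hrec (l : ℕ) : x (l + 2) =
      (1 + (2 * n - 1 : ℝ)⁻¹) • walkOperator φ (x (l + 1)) - (2 * n - 1 : ℝ)⁻¹ • x l := by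
    ext g
    rw [PiLp.sub_apply, PiLp.smul_apply, PiLp.smul_apply, walkOperator_apply]
    simp only [x, smul_eq_mul, ← Finset.sum_div, reducedCount_recurrence φ l g]
    generalize ∑ a, (reducedCount φ (l + 2) ((evalWord φ [a])⁻¹ * g) : ℝ) = s
    generalize (reducedCount φ (l + 1) g : ℝ) = t
    have hq' := hq.ne'
    have hn' : (n : ℝ) ≠ 0 := by positivity
    simp only [pow_succ]
    field_simp
    ring
  have hlim := tendsto_of_sub_walkOperator_walkOperator φ hn0 hgen hnoH x
    (tendsto_sub_apply_apply_of_recurrence (walkOperator φ)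
      (inner_isometryAverage_comm _ invLetter (letterTranslation_symm φ))
      (norm_isometryAverage_apply_le _) (inv_nonneg.2 hq.le)
      (inv_lt_one_of_one_lt₀ (by linarith)) x hrec) hx1 g
  rw [← tendsto_add_atTop_iff_nat 1]
  refine hlim.congr fun l => ?_
  rw [card_reduced φ, Nat.cast_sum, hsum]
  rfl
end
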